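/- arXiv:1702.07080 — 2 statements merged into one kernel-verified Lean document; each statement's English description precedes it below -/
import Mathlib

section
/- Let H be a separable real Hilbert space with orthonormal basis (ω_k)_{k≥1}, let λ₁ > 0 and let (λ_k)_{k≥1} be real numbers with λ_k ≥ λ₁ for all k. Let T > 0, u⁰ ∈ H, and let f : [0,T] → H be Bochner measurable with ∫₀ᵀ ‖f(s)‖² ds < ∞. Then there exists exactly one continuous function u : [0,T] → H such that u(0) = u⁰ and, for every k ≥ 1 and all t ∈ [0,T], ⟨u(t), ω_k⟩ = ⟨u⁰, ω_k⟩ + ∫₀ᵗ ( −λ_k ⟨u(s), ω_k⟩ + ⟨f(s), ω_k⟩ ) ds. Moreover, for all t ∈ [0,T], ‖u(t)‖² + ∑_{k≥1} λ_k ∫₀ᵗ ⟨u(s), ω_k⟩² ds ≤ max(1, 4/λ₁) ( ‖u⁰‖² + ∫₀ᵀ ‖f(s)‖² ds ). -/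
open Set MeasureTheory
open scoped RealInnerProductSpace

/-!
The equation decouples along the basis into the scalar problems `y = y₀ + ∫ (-λ y + g)` with
`y = ⟪u, ω k⟫`, `g = ⟪f, ω k⟫ ∈ L²(0,T)`. Everything about a scalar problem follows from the
product rule for indefinite integrals of `L¹` functions (`mul_eq_of_primitives`):

* existence (`scalar_exists`), by multiplying `exp (-λ t)` with `y₀ + ∫ exp (λ s) g s`;
* uniqueness (`scalar_unique`), since the difference `d` satisfies `d(t)² = -2λ ∫ d² ≤ 0`;
* the energy bound `y(t)² + λ ∫₀ᵗ y² ≤ y₀² + λ₁⁻¹ ∫₀ᵀ g²` (`scalar_energy`), from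
  `y(t)² = y₀² + 2 ∫ y (-λ y + g)` and Young's inequality `2 g y ≤ λ₁ y² + λ₁⁻¹ g²`.

By Bessel's inequality the right-hand sides `M k` of the scalar energy bounds are summable in `k`,
with sum at most `‖u₀‖² + λ₁⁻¹ ∫₀ᵀ ‖f‖²`. Hence the scalar solutions at time `t` are the
coefficients of a vector `u t`; the functions `‖u t - u t₀‖² = ∑ₖ (yₖ t - yₖ t₀)²` are dominated
termwise by `4 M k`, which makes `u` continuous; and summing the scalar bounds gives the energy
estimate with `λ₁⁻¹` in place of the larger `4 / λ₁`.
-/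

/-- Product rule for indefinite integrals: the product of two primitives of `L¹` functions is a
primitive of `p Q + P q`. -/
lemma mul_eq_of_primitives {t a b : ℝ} (ht : 0 ≤ t) {P Q p q : ℝ → ℝ}
    (hp : IntervalIntegrable p volume 0 t) (hq : IntervalIntegrable q volume 0 t)
    (hP : ∀ s ∈ Icc 0 t, P s = a + ∫ r in (0 : ℝ)..s, p r)
    (hQ : ∀ s ∈ Icc 0 t, Q s = b + ∫ r in (0 : ℝ)..s, q r) :
    P t * Q t = a * b + ∫ s in (0 : ℝ)..t, (p s * Q s + P s * q s) := by
  have h0 : (0 : ℝ) ∈ uIcc 0 t := left_mem_uIcc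
  have ac : ∀ {c : ℝ} {r : ℝ → ℝ}, IntervalIntegrable r volume 0 t →
      AbsolutelyContinuousOnInterval (fun s => c + ∫ x in (0 : ℝ)..s, r x) 0 t := by
    intro c r hr
    have hc : AbsolutelyContinuousOnInterval (fun _ : ℝ => c) 0 t :=
      contDiffOn_const.absolutelyContinuousOnInterval
    exact hc.add (hr.absolutelyContinuousOnInterval_intervalIntegral h0)
  have key := (ac (c := a) hp).integral_deriv_mul_eq_sub (ac (c := b) hq)
  simp only [intervalIntegral.integral_same, add_zero] at key
  rw [← hP t ⟨ht, le_rfl⟩, ← hQ t ⟨ht, le_rfl⟩] at key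
  rw [eq_comm, ← eq_sub_iff_add_eq', ← key]
  apply intervalIntegral.integral_congr_ae
  filter_upwards [hp.ae_hasDerivAt_integral, hq.ae_hasDerivAt_integral] with s h1 h2 hs
  have hs' := uIoc_subset_uIcc hs
  have hs2 : s ∈ Icc 0 t := by rwa [uIcc_of_le ht] at hs'
  rw [((h1 hs' 0 h0).const_add a).deriv, ((h2 hs' 0 h0).const_add b).deriv,
    hP s hs2, hQ s hs2]

section Scalar

variable {T : ℝ} {lam : ℝ} {y₀ : ℝ} {g y z : ℝ → ℝ}

lemma scalar_exists (hT : 0 < T) (lam y₀ : ℝ) (hg : IntervalIntegrable g volume 0 T) :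
    ∃ y : ℝ → ℝ, ContinuousOn y (Icc 0 T) ∧ ∀ t ∈ Icc (0 : ℝ) T,
      y t = y₀ + ∫ s in (0 : ℝ)..t, (-lam * y s + g s) := by
  have hp : IntervalIntegrable (fun s => Real.exp (lam * s) * g s) volume 0 T :=
    hg.continuousOn_mul (by fun_prop)
  refine ⟨fun t => (y₀ + ∫ s in (0 : ℝ)..t, Real.exp (lam * s) * g s) * Real.exp (-lam * t),
    ?_, fun t ht => ?_⟩
  · have := intervalIntegral.continuousOn_primitive_interval'
      (b₁ := 0) (b₂ := T) hp left_mem_uIcc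
    rw [uIcc_of_le hT.le] at this
    exact (continuousOn_const.add this).mul (by fun_prop)
  · have hsub : uIcc 0 t ⊆ uIcc 0 T := by
      rw [uIcc_of_le hT.le, uIcc_of_le ht.1]; exact Icc_subset_Icc_right ht.2
    have hq : Continuous fun s => -lam * Real.exp (-lam * s) := by fun_prop
    have := mul_eq_of_primitives (a := y₀) (b := 1) ht.1
      (P := fun t => y₀ + ∫ s in (0 : ℝ)..t, Real.exp (lam * s) * g s)
      (Q := fun t => Real.exp (-lam * t)) (hp.mono_set hsub)
      (hq.intervalIntegrable 0 t) (fun s _ => rfl) (fun s _ => ?_)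
    · simp only [mul_one] at this
      refine this.trans ?_
      congr 1
      refine intervalIntegral.integral_congr fun s _ => ?_
      have : Real.exp (lam * s) * Real.exp (-lam * s) = 1 := by
        rw [← Real.exp_add]; simp
      linear_combination g s * this
    · rw [intervalIntegral.integral_eq_sub_of_hasDerivAt (f := fun s => Real.exp (-lam * s))
        (fun x _ => ?_) (hq.intervalIntegrable 0 s)]
      · simp
      · simpa [mul_comm] using ((hasDerivAt_id x).const_mul (-lam)).exp

/-- A solution of the scalar problem satisfies `y(t)² = y₀² + 2 ∫₀ᵗ (-λ y + g) y`. -/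
lemma scalar_sq (hyc : ContinuousOn y (Icc 0 T)) (hg : IntervalIntegrable g volume 0 T)
    (hy : ∀ t ∈ Icc (0 : ℝ) T, y t = y₀ + ∫ s in (0 : ℝ)..t, (-lam * y s + g s))
    {t : ℝ} (ht : t ∈ Icc 0 T) :
    IntervalIntegrable (fun s => 2 * ((-lam * y s + g s) * y s)) volume 0 t ∧
      y t ^ 2 = y₀ ^ 2 + ∫ s in (0 : ℝ)..t, 2 * ((-lam * y s + g s) * y s) := by
  have hsub : Icc 0 t ⊆ Icc 0 T := Icc_subset_Icc_right ht.2
  have hyt : ContinuousOn y (uIcc 0 t) := by rw [uIcc_of_le ht.1]; exact hyc.mono hsub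
  have hgt : IntervalIntegrable g volume 0 t := hg.mono_set (by
    rwa [uIcc_of_le ht.1, uIcc_of_le (ht.1.trans ht.2)])
  have hp : IntervalIntegrable (fun s => -lam * y s + g s) volume 0 t :=
    (hyt.intervalIntegrable.const_mul (-lam)).add hgt
  refine ⟨(hp.mul_continuousOn hyt).const_mul 2, ?_⟩
  have := mul_eq_of_primitives ht.1 hp hp (fun s hs => hy s (hsub hs))
    (fun s hs => hy s (hsub hs))
  rw [sq, sq, this]
  congr 1
  exact intervalIntegral.integral_congr fun s _ => by ring

lemma scalar_energy {lam₁ : ℝ} (h1 : 0 < lam₁) (hlam : lam₁ ≤ lam)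
    (hyc : ContinuousOn y (Icc 0 T)) (hg : IntervalIntegrable g volume 0 T)
    (hg2 : IntervalIntegrable (fun s => g s ^ 2) volume 0 T)
    (hy : ∀ t ∈ Icc (0 : ℝ) T, y t = y₀ + ∫ s in (0 : ℝ)..t, (-lam * y s + g s))
    {t : ℝ} (ht : t ∈ Icc 0 T) :
    y t ^ 2 + lam * ∫ s in (0 : ℝ)..t, y s ^ 2 ≤
      y₀ ^ 2 + lam₁⁻¹ * ∫ s in (0 : ℝ)..T, g s ^ 2 := by
  obtain ⟨hi, hsq⟩ := scalar_sq hyc hg hy ht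
  have hsub : Icc 0 t ⊆ Icc 0 T := Icc_subset_Icc_right ht.2
  have hg2t : IntervalIntegrable (fun s => g s ^ 2) volume 0 t := hg2.mono_set (by
    rwa [uIcc_of_le ht.1, uIcc_of_le (ht.1.trans ht.2)])
  have hy2 : IntervalIntegrable (fun s => y s ^ 2) volume 0 t := by
    refine ContinuousOn.intervalIntegrable ?_
    rw [uIcc_of_le ht.1]; exact (hyc.mono hsub).pow 2
  have hle : ∫ s in (0 : ℝ)..t, 2 * ((-lam * y s + g s) * y s) ≤
      ∫ s in (0 : ℝ)..t, (-lam * y s ^ 2 + lam₁⁻¹ * g s ^ 2) := by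
    refine intervalIntegral.integral_mono_on ht.1 hi
      ((hy2.const_mul _).add (hg2t.const_mul _)) fun s _ => ?_
    -- Young's inequality `2 g y ≤ λ₁ y² + λ₁⁻¹ g²`, by completing the square
    have e : lam₁⁻¹ * (lam₁ * y s - g s) ^ 2
        = lam₁ * y s ^ 2 - 2 * g s * y s + lam₁⁻¹ * g s ^ 2 := by
      field_simp; ring
    have : 0 ≤ lam₁⁻¹ * (lam₁ * y s - g s) ^ 2 := by positivity
    nlinarith [mul_nonneg (sub_nonneg.2 hlam) (sq_nonneg (y s))]
  rw [intervalIntegral.integral_add (hy2.const_mul _) (hg2t.const_mul _),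
    intervalIntegral.integral_const_mul (-lam),
    intervalIntegral.integral_const_mul lam₁⁻¹] at hle
  have hmono : ∫ s in (0 : ℝ)..t, g s ^ 2 ≤ ∫ s in (0 : ℝ)..T, g s ^ 2 :=
    intervalIntegral.integral_mono_interval le_rfl ht.1 ht.2
      (Filter.Eventually.of_forall fun s => sq_nonneg _) hg2
  have := mul_le_mul_of_nonneg_left hmono (inv_nonneg.2 h1.le)
  linarith

lemma scalar_unique (hlam : 0 ≤ lam)
    (hyc : ContinuousOn y (Icc 0 T)) (hzc : ContinuousOn z (Icc 0 T))
    (hg : IntervalIntegrable g volume 0 T)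
    (hy : ∀ t ∈ Icc (0 : ℝ) T, y t = y₀ + ∫ s in (0 : ℝ)..t, (-lam * y s + g s))
    (hz : ∀ t ∈ Icc (0 : ℝ) T, z t = y₀ + ∫ s in (0 : ℝ)..t, (-lam * z s + g s))
    {t : ℝ} (ht : t ∈ Icc 0 T) : y t = z t := by
  have hint : ∀ {w : ℝ → ℝ} {s : ℝ}, ContinuousOn w (Icc 0 T) → s ∈ Icc 0 T →
      IntervalIntegrable (fun s => -lam * w s + g s) volume 0 s := by
    intro w s hw hs
    have hsub : uIcc 0 s ⊆ Icc 0 T := by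
      rw [uIcc_of_le hs.1]; exact Icc_subset_Icc_right hs.2
    refine ((hw.mono hsub).intervalIntegrable.const_mul (-lam)).add (hg.mono_set ?_)
    rwa [uIcc_of_le (hs.1.trans hs.2)]
  -- the difference solves the homogeneous problem with zero initial value
  have hd : ∀ s ∈ Icc (0 : ℝ) T, (y s - z s) =
      0 + ∫ r in (0 : ℝ)..s, (-lam * (y r - z r) + (fun _ => (0 : ℝ)) r) := by
    intro s hs
    rw [hy s hs, hz s hs, add_sub_add_left_eq_sub,
      ← intervalIntegral.integral_sub (hint hyc hs) (hint hzc hs), zero_add]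
    exact intervalIntegral.integral_congr fun r _ => by ring
  have h2 := (scalar_sq (y := fun s => y s - z s) (hyc.sub hzc)
    intervalIntegrable_const hd ht).2
  have : 0 ≤ ∫ s in (0 : ℝ)..t, -(2 * ((-lam * (y s - z s) + 0) * (y s - z s))) := by
    refine intervalIntegral.integral_nonneg ht.1 fun s _ => ?_
    nlinarith [mul_nonneg hlam (sq_nonneg (y s - z s))]
  rw [intervalIntegral.integral_neg] at this
  have h3 : (y t - z t) ^ 2 = 0 := le_antisymm (by linarith) (sq_nonneg _)
  exact sub_eq_zero.1 (pow_eq_zero_iff two_ne_zero |>.1 h3)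

end Scalar

section Modes

variable {H : Type*} [NormedAddCommGroup H] [InnerProductSpace ℝ H]

/-- Parseval's identity. -/
lemma hasSum_inner_sq (ω : HilbertBasis ℕ ℝ H) (x : H) :
    HasSum (fun k => ⟪x, ω k⟫ ^ 2) (‖x‖ ^ 2) := by
  have := ω.hasSum_inner_mul_inner x x
  rw [real_inner_self_eq_norm_sq] at this
  refine this.congr_fun fun k => ?_
  rw [sq, real_inner_comm x (ω k)]

lemma exists_of_summable_sq (ω : HilbertBasis ℕ ℝ H) {c : ℕ → ℝ}
    (hc : Summable fun k => c k ^ 2) : ∃ x : H, ∀ k, ⟪x, ω k⟫ = c k := by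
  have hm : Memℓp c 2 := memℓp_gen (by simpa using hc)
  refine ⟨ω.repr.symm ⟨c, hm⟩, fun k => ?_⟩
  rw [real_inner_comm, ← ω.repr_apply_apply, LinearIsometryEquiv.apply_symm_apply]

/-- A function whose squared coefficients are bounded on `S` by a summable sequence is continuous
on `S` as soon as its coefficients are. -/
lemma continuousOn_of_modes (ω : HilbertBasis ℕ ℝ H) {u : ℝ → H} {S : Set ℝ} {M : ℕ → ℝ}
    (hM : Summable M) (hc : ∀ k, ContinuousOn (fun t => ⟪u t, ω k⟫) S)
    (hb : ∀ k, ∀ t ∈ S, ⟪u t, ω k⟫ ^ 2 ≤ M k) : ContinuousOn u S := by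
  intro t₀ ht₀
  have hφ : ContinuousOn (fun t => ∑' k, (⟪u t, ω k⟫ - ⟪u t₀, ω k⟫) ^ 2) S := by
    refine continuousOn_tsum (fun k => ((hc k).sub continuousOn_const).pow 2)
      (hM.mul_left 4) fun k t ht => ?_
    rw [Real.norm_of_nonneg (sq_nonneg _)]
    nlinarith [hb k t ht, hb k t₀ ht₀, sq_nonneg (⟪u t, ω k⟫ + ⟪u t₀, ω k⟫)]
  have e : ∀ t, ∑' k, (⟪u t, ω k⟫ - ⟪u t₀, ω k⟫) ^ 2 = ‖u t - u t₀‖ ^ 2 := fun t => by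
    simp_rw [← inner_sub_left]; exact (hasSum_inner_sq ω _).tsum_eq
  simp_rw [e] at hφ
  have h1 := (hφ.sqrt t₀ ht₀).tendsto
  simp only [Real.sqrt_sq (norm_nonneg _)] at h1
  rw [sub_self, norm_zero] at h1
  exact tendsto_iff_norm_sub_tendsto_zero.2 h1

end Modes

/-- **Abstract Faedo–Galerkin well-posedness and energy estimate for the linear
parabolic problem `u′ + 𝓛u = f`.**  `𝓛` is represented by a Hilbert basis `(ω_k)` of
eigenvectors with eigenvalues `λ_k ≥ λ₁ > 0`.  For `u⁰ ∈ H` and `f` square-Bochner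
integrable on `[0,T]` there is exactly one continuous `u : [0,T] → H` with `u(0) = u⁰`
solving the mode-wise integral equations, and it satisfies the energy estimate
`‖u(t)‖² + ∑ₖ λ_k ∫₀ᵗ ⟨u, ω_k⟩² ≤ max(1, 4/λ₁)(‖u⁰‖² + ∫₀ᵀ ‖f‖²)`. -/
theorem stmt12 {H : Type*} [NormedAddCommGroup H] [InnerProductSpace ℝ H]
    [CompleteSpace H] (ω : HilbertBasis ℕ ℝ H)
    (lam₁ : ℝ) (hlam₁ : 0 < lam₁) (lam : ℕ → ℝ) (hlam : ∀ k, lam₁ ≤ lam k)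
    (T : ℝ) (hT : 0 < T) (u₀ : H) (f : ℝ → H)
    (hfm : AEStronglyMeasurable f (volume.restrict (Icc 0 T)))
    (hfint : IntegrableOn (fun s => ‖f s‖ ^ 2) (Icc 0 T)) :
    (∃ u : ℝ → H,
        (ContinuousOn u (Icc 0 T) ∧ u 0 = u₀ ∧
          ∀ k : ℕ, ∀ t ∈ Icc (0 : ℝ) T,
            ⟪u t, ω k⟫ = ⟪u₀, ω k⟫ +
              ∫ s in (0 : ℝ)..t, (-(lam k) * ⟪u s, ω k⟫ + ⟪f s, ω k⟫)) ∧
        ∀ t ∈ Icc (0 : ℝ) T,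
          ‖u t‖ ^ 2 + ∑' k : ℕ, lam k * ∫ s in (0 : ℝ)..t, ⟪u s, ω k⟫ ^ 2 ≤
            max 1 (4 / lam₁) * (‖u₀‖ ^ 2 + ∫ s in (0 : ℝ)..T, ‖f s‖ ^ 2)) ∧
    (∀ u v : ℝ → H,
        (ContinuousOn u (Icc 0 T) ∧ u 0 = u₀ ∧
          ∀ k : ℕ, ∀ t ∈ Icc (0 : ℝ) T,
            ⟪u t, ω k⟫ = ⟪u₀, ω k⟫ +
              ∫ s in (0 : ℝ)..t, (-(lam k) * ⟪u s, ω k⟫ + ⟪f s, ω k⟫)) →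
        (ContinuousOn v (Icc 0 T) ∧ v 0 = u₀ ∧
          ∀ k : ℕ, ∀ t ∈ Icc (0 : ℝ) T,
            ⟪v t, ω k⟫ = ⟪u₀, ω k⟫ +
              ∫ s in (0 : ℝ)..t, (-(lam k) * ⟪v s, ω k⟫ + ⟪f s, ω k⟫)) →
        EqOn u v (Icc 0 T)) := by
  have ii : ∀ {φ : ℝ → ℝ}, IntegrableOn φ (Icc 0 T) → IntervalIntegrable φ volume 0 T :=
    fun h => (intervalIntegrable_iff_integrableOn_Icc_of_le hT.le).2 h
  have hf2 : MemLp f 2 (volume.restrict (Icc 0 T)) :=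
    (memLp_two_iff_integrable_sq_norm hfm).2 hfint
  have hf1 : Integrable f (volume.restrict (Icc 0 T)) := hf2.integrable one_le_two
  have hg : ∀ k, IntervalIntegrable (fun s => ⟪f s, ω k⟫) volume 0 T :=
    fun k => ii (hf1.inner_const (ω k))
  have bessel : ∀ (x : H) (S : Finset ℕ), ∑ k ∈ S, ⟪x, ω k⟫ ^ 2 ≤ ‖x‖ ^ 2 := fun x S =>
    sum_le_hasSum S (fun k _ => sq_nonneg _) (hasSum_inner_sq ω x)
  have hg2 : ∀ k, IntervalIntegrable (fun s => ⟪f s, ω k⟫ ^ 2) volume 0 T := fun k => by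
    refine ii (Integrable.mono' hfint ((hfm.inner_const).pow 2)
      (Filter.Eventually.of_forall fun s => ?_))
    rw [Real.norm_of_nonneg (sq_nonneg _)]
    simpa using bessel (f s) {k}
  have hlam0 : ∀ k, 0 ≤ lam k := fun k => hlam₁.le.trans (hlam k)
  refine ⟨?_, ?_⟩
  · -- `M k` is the scalar energy bound of the `k`-th mode
    set M : ℕ → ℝ := fun k =>
      ⟪u₀, ω k⟫ ^ 2 + lam₁⁻¹ * ∫ s in (0 : ℝ)..T, ⟪f s, ω k⟫ ^ 2 with hMdef
    set E : ℝ := ∫ s in (0 : ℝ)..T, ‖f s‖ ^ 2 with hE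
    have hE0 : 0 ≤ E := intervalIntegral.integral_nonneg hT.le fun s _ => by positivity
    have hM0 : 0 ≤ M := fun k => add_nonneg (sq_nonneg _) (mul_nonneg (inv_nonneg.2 hlam₁.le)
      (intervalIntegral.integral_nonneg hT.le fun s _ => sq_nonneg _))
    have hMS : ∀ S : Finset ℕ, ∑ k ∈ S, M k ≤ ‖u₀‖ ^ 2 + lam₁⁻¹ * E := by
      intro S
      rw [Finset.sum_add_distrib, ← Finset.mul_sum,
        ← intervalIntegral.integral_finsetSum fun k _ => hg2 k]
      refine add_le_add (bessel u₀ S) (mul_le_mul_of_nonneg_left ?_ (inv_nonneg.2 hlam₁.le))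
      refine intervalIntegral.integral_mono_on hT.le ?_ (ii hfint) fun s _ => bessel (f s) S
      simpa only [Finset.sum_fn] using IntervalIntegrable.sum S fun k _ => hg2 k
    have hM : Summable M := summable_of_sum_le hM0 hMS
    choose y hyc hy using fun k => scalar_exists hT (lam k) ⟪u₀, ω k⟫ (hg k)
    have hen := fun k t (ht : t ∈ Icc 0 T) =>
      scalar_energy hlam₁ (hlam k) (hyc k) (hg k) (hg2 k) (hy k) ht
    have hJ0 : ∀ k, ∀ t ∈ Icc 0 T, 0 ≤ lam k * ∫ s in (0 : ℝ)..t, y k s ^ 2 := fun k t ht =>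
      mul_nonneg (hlam0 k) (intervalIntegral.integral_nonneg ht.1 fun s _ => sq_nonneg _)
    have hyM : ∀ k, ∀ t ∈ Icc 0 T, y k t ^ 2 ≤ M k := fun k t ht => by
      have := hen k t ht
      have := hJ0 k t ht
      simp only [hMdef]; linarith
    have hex : ∀ t, t ∈ Icc 0 T → ∃ x : H, ∀ k, ⟪x, ω k⟫ = y k t := fun t ht =>
      exists_of_summable_sq ω (Summable.of_nonneg_of_le (fun k => sq_nonneg _)
        (fun k => hyM k t ht) hM)
    choose! u hu using hex
    have hus : ∀ {t}, t ∈ Icc 0 T → ∀ s ∈ uIcc 0 t, ∀ k, ⟪u s, ω k⟫ = y k s := by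
      intro t ht s hs
      rw [uIcc_of_le ht.1] at hs
      exact hu s ⟨hs.1, hs.2.trans ht.2⟩
    refine ⟨u, ⟨?_, ?_, fun k t ht => ?_⟩, fun t ht => ?_⟩
    · exact continuousOn_of_modes ω hM
        (fun k => (hyc k).congr fun t ht => hu t ht k)
        fun k t ht => by rw [hu t ht k]; exact hyM k t ht
    · have h0 : (0 : ℝ) ∈ Icc 0 T := ⟨le_rfl, hT.le⟩
      apply ω.repr.injective
      ext k
      rw [ω.repr_apply_apply, ω.repr_apply_apply, real_inner_comm, hu 0 h0 k, hy k 0 h0,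
        real_inner_comm]
      simp
    · rw [hu t ht k, hy k t ht]
      congr 1
      exact intervalIntegral.integral_congr fun s hs => by simp only [hus ht s hs k]
    · have e : ∀ k, ∫ s in (0 : ℝ)..t, ⟪u s, ω k⟫ ^ 2 = ∫ s in (0 : ℝ)..t, y k s ^ 2 :=
        fun k => intervalIntegral.integral_congr fun s hs => by simp only [hus ht s hs k]
      simp_rw [e]
      have hs1 : HasSum (fun k => y k t ^ 2) (‖u t‖ ^ 2) := by
        simpa only [hu t ht] using hasSum_inner_sq ω (u t)
      have hs2 : Summable fun k => lam k * ∫ s in (0 : ℝ)..t, y k s ^ 2 :=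
        Summable.of_nonneg_of_le (fun k => hJ0 k t ht)
          (fun k => (le_add_of_nonneg_left (sq_nonneg _)).trans (hen k t ht)) hM
      calc _ = ∑' k, (y k t ^ 2 + lam k * ∫ s in (0 : ℝ)..t, y k s ^ 2) :=
            (hs1.add hs2.hasSum).tsum_eq.symm
        _ ≤ ∑' k, M k := (hs1.summable.add hs2).tsum_le_tsum (fun k => hen k t ht) hM
        _ ≤ ‖u₀‖ ^ 2 + lam₁⁻¹ * E := Real.tsum_le_of_sum_le hM0 hMS
        _ ≤ _ := by
          have h1 : lam₁⁻¹ ≤ max 1 (4 / lam₁) := le_max_of_le_right (by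
            rw [div_eq_mul_inv]; nlinarith [inv_pos.2 hlam₁])
          nlinarith [mul_le_mul_of_nonneg_right h1 hE0,
            mul_le_mul_of_nonneg_right (le_max_left 1 (4 / lam₁)) (sq_nonneg ‖u₀‖)]
  · rintro u v ⟨huc, -, hu⟩ ⟨hvc, -, hv⟩ t ht
    apply ω.repr.injective
    ext k
    rw [ω.repr_apply_apply, ω.repr_apply_apply, real_inner_comm, real_inner_comm (v t)]
    exact scalar_unique (hlam0 k) (huc.inner continuousOn_const)
      (hvc.inner continuousOn_const) (hg k) (hu k) (hv k) ht
end

section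
/- Let H be a separable real Hilbert space with orthonormal basis (ω_k)_{k≥1}, let λ₁ > 0 and let (λ_k)_{k≥1} be real numbers with λ_k ≥ λ₁ for all k. Let T > 0, let u⁰, u¹ ∈ H with ∑_{k≥1} λ_k ⟨u⁰, ω_k⟩² < ∞, and let f : [0,T] → H be Bochner measurable with ∫₀ᵀ ‖f(s)‖² ds < ∞. Then there exists exactly one pair of continuous functions u, v : [0,T] → H such that u(0) = u⁰, v(0) = u¹ and, for every k ≥ 1 and all t ∈ [0,T], ⟨u(t), ω_k⟩ = ⟨u⁰, ω_k⟩ + ∫₀ᵗ ⟨v(s), ω_k⟩ ds and ⟨v(t), ω_k⟩ = ⟨u¹, ω_k⟩ + ∫₀ᵗ ( −λ_k ⟨u(s), ω_k⟩ + ⟨f(s), ω_k⟩ ) ds. Moreover, for all t ∈ [0,T], ‖v(t)‖² + ∑_{k≥1} λ_k ⟨u(t), ω_k⟩² ≤ e^{t} ( ‖u¹‖² + ∑_{k≥1} λ_k ⟨u⁰, ω_k⟩² + ∫₀ᵗ ‖f(s)‖² ds ). -/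
/-! Projected onto `ω k`, the system is the scalar oscillator `a' = b`, `b' = -μ² a + g` with
`μ = √(λ_k)`, `a = ⟪u, ω k⟫`, `b = ⟪v, ω k⟫` and `g = ⟪f, ω k⟫ ∈ L²(0, T)`.

*Existence.* In the frame rotating with angular speed `μ`, Duhamel's formula reads
`μ a = p cos (μ t) + q sin (μ t)`, `b = -p sin (μ t) + q cos (μ t)` with
`p = μ a₀ - ∫₀ᵗ sin (μ s) g`, `q = b₀ + ∫₀ᵗ cos (μ s) g`. Since `g` is merely integrable, the
integral equations are checked with the product rule for absolutely continuous functions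
(`integral_deriv_mul_primitive`). The modal energy `b² + μ² a² = p² + q²` satisfies
`b² + μ² a² ≤ (1 + t) (b₀² + μ² a₀² + ∫₀ᵗ g²)` (`rotating_energy_le`). Summing over `k` with
Parseval's identity, for `f` in the integrated form `hasSum_integral_inner_sq`, and using
`1 + t ≤ eᵗ` gives the energy estimate without Grönwall's inequality. The same bound taken at
`t = T` dominates the squared coefficients by a summable sequence, uniformly in time, so they are
the coefficients of `H`-valued continuous functions (`exists_continuousOn_of_coeff`).

*Uniqueness.* The modal energy of the difference of two solutions has zero derivative and vanishes
at `0` (`oscillator_eq_zero`). -/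

open Set MeasureTheory
open scoped RealInnerProductSpace

/-- The product rule `(φ G)' = φ' G + φ h`, integrated, for `φ` of class `C¹` and
`G = c + ∫₀ˢ h` with `h` merely integrable. -/
lemma integral_deriv_mul_primitive {φ φ' h : ℝ → ℝ} {t : ℝ} (c : ℝ)
    (hφ : ∀ x, HasDerivAt φ (φ' x) x) (hφ' : Continuous φ')
    (hh : IntervalIntegrable h volume 0 t) :
    ∫ s in (0 : ℝ)..t, (φ' s * (c + ∫ r in (0 : ℝ)..s, h r) + φ s * h s)
      = φ t * (c + ∫ r in (0 : ℝ)..t, h r) - φ 0 * c := by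
  have hd : deriv φ = φ' := funext fun x => (hφ x).deriv
  have hC : ContDiff ℝ 1 φ := by
    rw [contDiff_one_iff_deriv]
    exact ⟨fun x => (hφ x).differentiableAt, by rwa [hd]⟩
  have hac : AbsolutelyContinuousOnInterval φ 0 t :=
    hC.contDiffOn.absolutelyContinuousOnInterval
  have hP : AbsolutelyContinuousOnInterval (fun s => ∫ r in (0 : ℝ)..s, h r) 0 t :=
    hh.absolutelyContinuousOnInterval_intervalIntegral (by simp)
  have hc : AbsolutelyContinuousOnInterval (fun _ : ℝ => c) 0 t :=
    (contDiff_const (n := 1)).contDiffOn.absolutelyContinuousOnInterval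
  have hG : AbsolutelyContinuousOnInterval (fun s => c + ∫ r in (0 : ℝ)..s, h r) 0 t :=
    hc.add hP
  have key := hac.integral_deriv_mul_eq_sub hG
  simp only [intervalIntegral.integral_same, add_zero] at key
  rw [← key]
  apply intervalIntegral.integral_congr_ae
  filter_upwards [hh.ae_hasDerivAt_integral] with x hx hx'
  rw [hd, ((hx (uIoc_subset_uIcc hx') 0 (by simp)).const_add c).deriv]

/-- The energy estimate for one mode, in rotating coordinates: `|z₀ + ∫₀ᵗ i e^{iμs} g|²` is at
most `(1 + t) (|z₀|² + ∫₀ᵗ g²)`, where `z₀ = x + i y`. -/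
lemma rotating_energy_le {g : ℝ → ℝ} {t : ℝ} (μ x y : ℝ) (ht : 0 ≤ t)
    (hg : IntervalIntegrable g volume 0 t)
    (hg2 : IntervalIntegrable (fun s => g s ^ 2) volume 0 t) :
    (x + ∫ s in (0 : ℝ)..t, -Real.sin (μ * s) * g s) ^ 2
        + (y + ∫ s in (0 : ℝ)..t, Real.cos (μ * s) * g s) ^ 2
      ≤ (1 + t) * (x ^ 2 + y ^ 2 + ∫ s in (0 : ℝ)..t, g s ^ 2) := by
  have hS : IntervalIntegrable (fun s => -Real.sin (μ * s) * g s) volume 0 t :=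
    hg.continuousOn_mul (by fun_prop)
  have hC : IntervalIntegrable (fun s => Real.cos (μ * s) * g s) volume 0 t :=
    hg.continuousOn_mul (by fun_prop)
  set p := x + ∫ s in (0 : ℝ)..t, -Real.sin (μ * s) * g s with hp
  set q := y + ∫ s in (0 : ℝ)..t, Real.cos (μ * s) * g s with hq
  have h1t : 0 < 1 + t := by linarith
  -- With `E = p² + q²`: `E = p x + q y + ∫₀ᵗ w g` where `w² ≤ E`; both terms are then bounded by
  -- Young's inequality with weight `1 + t`, chosen so that the `E`-terms add up to `E / 2`.
  have hE : p ^ 2 + q ^ 2 = p * x + q * y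
      + ∫ s in (0 : ℝ)..t, (p * (-Real.sin (μ * s) * g s) + q * (Real.cos (μ * s) * g s)) := by
    rw [intervalIntegral.integral_add (hS.const_mul p) (hC.const_mul q),
      intervalIntegral.integral_const_mul, intervalIntegral.integral_const_mul]
    linear_combination p * hp + q * hq
  have hI : ∫ s in (0 : ℝ)..t, (p * (-Real.sin (μ * s) * g s) + q * (Real.cos (μ * s) * g s))
      ≤ ∫ s in (0 : ℝ)..t, ((p ^ 2 + q ^ 2) / (1 + t) / 2 + (1 + t) / 2 * g s ^ 2) := by
    apply intervalIntegral.integral_mono_on ht ((hS.const_mul p).add (hC.const_mul q))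
      (intervalIntegrable_const.add (hg2.const_mul _))
    intro s _
    have hsc := Real.sin_sq_add_cos_sq (μ * s)
    set S := Real.sin (μ * s)
    set C := Real.cos (μ * s)
    have hw : (-p * S + q * C) ^ 2 ≤ p ^ 2 + q ^ 2 := by
      have : p ^ 2 + q ^ 2 - (-p * S + q * C) ^ 2 = (p * C + q * S) ^ 2 := by
        linear_combination (-(p ^ 2) - q ^ 2) * hsc
      nlinarith [sq_nonneg (p * C + q * S)]
    have : (-p * S + q * C) * g s
        ≤ (-p * S + q * C) ^ 2 / (1 + t) / 2 + (1 + t) / 2 * g s ^ 2 := by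
      have h2 : (-p * S + q * C) ^ 2 / (1 + t) / 2 + (1 + t) / 2 * g s ^ 2
          - (-p * S + q * C) * g s
          = ((-p * S + q * C) - (1 + t) * g s) ^ 2 / (1 + t) / 2 := by
        field_simp
        ring
      have : 0 ≤ ((-p * S + q * C) - (1 + t) * g s) ^ 2 / (1 + t) / 2 := by positivity
      linarith
    have h3 : (-p * S + q * C) ^ 2 / (1 + t) / 2 ≤ (p ^ 2 + q ^ 2) / (1 + t) / 2 := by
      gcongr
    linarith
  rw [intervalIntegral.integral_add intervalIntegrable_const (hg2.const_mul _),
    intervalIntegral.integral_const, intervalIntegral.integral_const_mul] at hI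
  set G := ∫ s in (0 : ℝ)..t, g s ^ 2
  have h0 : p * x + q * y ≤ (p ^ 2 + q ^ 2) / (1 + t) / 2 + (1 + t) / 2 * (x ^ 2 + y ^ 2) := by
    have h2 : (p ^ 2 + q ^ 2) / (1 + t) / 2 + (1 + t) / 2 * (x ^ 2 + y ^ 2) - (p * x + q * y)
        = ((p - (1 + t) * x) ^ 2 + (q - (1 + t) * y) ^ 2) / (1 + t) / 2 := by
      field_simp
      ring
    have : 0 ≤ ((p - (1 + t) * x) ^ 2 + (q - (1 + t) * y) ^ 2) / (1 + t) / 2 := by positivity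
    linarith
  have h4 : (p ^ 2 + q ^ 2) / (1 + t) / 2 + (t - 0) • ((p ^ 2 + q ^ 2) / (1 + t) / 2)
      = (p ^ 2 + q ^ 2) / 2 := by
    simp only [smul_eq_mul]
    field_simp
    ring
  linarith

/-- The forced oscillator `a' = b`, `b' = -l a + g` with square-integrable forcing has a solution
satisfying the energy estimate. -/
lemma exists_oscillator {g : ℝ → ℝ} {T l : ℝ} (hT : 0 < T) (hl : 0 < l) (a₀ b₀ : ℝ)
    (hg : IntegrableOn g (Icc 0 T)) (hg2 : IntegrableOn (fun s => g s ^ 2) (Icc 0 T)) :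
    ∃ a b : ℝ → ℝ, ContinuousOn a (Icc 0 T) ∧ ContinuousOn b (Icc 0 T) ∧
      (∀ t ∈ Icc (0 : ℝ) T, a t = a₀ + ∫ s in (0 : ℝ)..t, b s) ∧
      (∀ t ∈ Icc (0 : ℝ) T, b t = b₀ + ∫ s in (0 : ℝ)..t, (-l * a s + g s)) ∧
      (∀ t ∈ Icc (0 : ℝ) T, b t ^ 2 + l * a t ^ 2 ≤
        (1 + t) * (b₀ ^ 2 + l * a₀ ^ 2 + ∫ s in (0 : ℝ)..t, g s ^ 2)) := by
  obtain ⟨μ, hμ, rfl⟩ : ∃ μ : ℝ, 0 < μ ∧ l = μ ^ 2 :=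
    ⟨√l, Real.sqrt_pos.2 hl, (Real.sq_sqrt hl.le).symm⟩
  have hsub {t : ℝ} (ht : t ∈ Icc (0 : ℝ) T) : uIcc 0 t ⊆ Icc 0 T := by
    rw [uIcc_of_le ht.1]; exact Icc_subset_Icc_right ht.2
  have hgi {t : ℝ} (ht : t ∈ Icc (0 : ℝ) T) : IntervalIntegrable g volume 0 t :=
    (hg.mono_set (hsub ht)).intervalIntegrable
  have hgi2 {t : ℝ} (ht : t ∈ Icc (0 : ℝ) T) :
      IntervalIntegrable (fun s => g s ^ 2) volume 0 t :=
    (hg2.mono_set (hsub ht)).intervalIntegrable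
  let p : ℝ → ℝ := fun t => μ * a₀ + ∫ s in (0 : ℝ)..t, -Real.sin (μ * s) * g s
  let q : ℝ → ℝ := fun t => b₀ + ∫ s in (0 : ℝ)..t, Real.cos (μ * s) * g s
  have hSon : IntegrableOn (fun s => -Real.sin (μ * s) * g s) (Icc 0 T) :=
    hg.continuousOn_mul (by fun_prop) isCompact_Icc
  have hCon : IntegrableOn (fun s => Real.cos (μ * s) * g s) (Icc 0 T) :=
    hg.continuousOn_mul (by fun_prop) isCompact_Icc
  have hprim {h : ℝ → ℝ} (hh : IntegrableOn h (Icc 0 T)) :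
      ContinuousOn (fun t => ∫ s in (0 : ℝ)..t, h s) (Icc 0 T) := by
    rw [← uIcc_of_le hT.le] at hh ⊢
    exact intervalIntegral.continuousOn_primitive_interval hh
  have hpc : ContinuousOn p (Icc 0 T) := continuousOn_const.add (hprim hSon)
  have hqc : ContinuousOn q (Icc 0 T) := continuousOn_const.add (hprim hCon)
  have dsin (x : ℝ) : HasDerivAt (fun x => Real.sin (μ * x)) (μ * Real.cos (μ * x)) x := by
    simpa [mul_comm] using ((hasDerivAt_id x).const_mul μ).sin
  have dcos (x : ℝ) : HasDerivAt (fun x => Real.cos (μ * x)) (-(μ * Real.sin (μ * x))) x := by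
    simpa [mul_comm] using ((hasDerivAt_id x).const_mul μ).cos
  have hprod {φ φ' h P : ℝ → ℝ} {t c : ℝ} (ht : t ∈ Icc (0 : ℝ) T)
      (hφ : ∀ x, HasDerivAt φ (φ' x) x) (hφ' : Continuous φ')
      (hh : IntegrableOn h (Icc 0 T)) (hP : P = fun s => c + ∫ r in (0 : ℝ)..s, h r) :
      IntervalIntegrable (fun s => φ' s * P s + φ s * h s) volume 0 t ∧
      ∫ s in (0 : ℝ)..t, (φ' s * P s + φ s * h s) = φ t * P t - φ 0 * c := by
    have hhi : IntervalIntegrable h volume 0 t := (hh.mono_set (hsub ht)).intervalIntegrable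
    have hφc : Continuous φ := continuous_iff_continuousAt.2 fun x => (hφ x).continuousAt
    subst hP
    refine ⟨?_, integral_deriv_mul_primitive c hφ hφ' hhi⟩
    refine IntervalIntegrable.add (ContinuousOn.intervalIntegrable ?_)
      (hhi.continuousOn_mul hφc.continuousOn)
    refine hφ'.continuousOn.mul (continuousOn_const.add ?_)
    exact (hprim hh).mono (hsub ht)
  refine ⟨fun t => (Real.cos (μ * t) * p t + Real.sin (μ * t) * q t) / μ,
    fun t => -Real.sin (μ * t) * p t + Real.cos (μ * t) * q t, ?_, ?_, ?_, ?_, ?_⟩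
  · exact (((by fun_prop : ContinuousOn (fun t => Real.cos (μ * t)) (Icc 0 T)).mul hpc).add
      ((by fun_prop : ContinuousOn (fun t => Real.sin (μ * t)) (Icc 0 T)).mul hqc)).div_const μ
  · exact ((by fun_prop : ContinuousOn (fun t => -Real.sin (μ * t)) (Icc 0 T)).mul hpc).add
      ((by fun_prop : ContinuousOn (fun t => Real.cos (μ * t)) (Icc 0 T)).mul hqc)
  · intro t ht
    obtain ⟨i1, e1⟩ := hprod (P := p) ht dcos (by fun_prop) hSon rfl
    obtain ⟨i2, e2⟩ := hprod (P := q) ht dsin (by fun_prop) hCon rfl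
    have := intervalIntegral.integral_add i1 i2
    rw [e1, e2] at this
    have h2 : ∫ s in (0 : ℝ)..t, (-(μ * Real.sin (μ * s)) * p s
          + Real.cos (μ * s) * (-Real.sin (μ * s) * g s)
          + (μ * Real.cos (μ * s) * q s + Real.sin (μ * s) * (Real.cos (μ * s) * g s)))
        = μ * ∫ s in (0 : ℝ)..t, (-Real.sin (μ * s) * p s + Real.cos (μ * s) * q s) := by
      rw [← intervalIntegral.integral_const_mul]
      congr 1
      ext s
      ring
    rw [h2] at this
    simp only [mul_zero, Real.cos_zero, Real.sin_zero] at this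
    rw [div_eq_iff hμ.ne']
    linear_combination -this
  · intro t ht
    obtain ⟨i1, e1⟩ := hprod (P := p) ht (fun x => (dsin x).neg) (by fun_prop) hSon rfl
    obtain ⟨i2, e2⟩ := hprod (P := q) ht dcos (by fun_prop) hCon rfl
    have := intervalIntegral.integral_add i1 i2
    rw [e1, e2] at this
    have h2 : ∫ s in (0 : ℝ)..t, (-(μ * Real.cos (μ * s)) * p s
          + -Real.sin (μ * s) * (-Real.sin (μ * s) * g s)
          + (-(μ * Real.sin (μ * s)) * q s + Real.cos (μ * s) * (Real.cos (μ * s) * g s)))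
        = ∫ s in (0 : ℝ)..t,
          (-μ ^ 2 * ((Real.cos (μ * s) * p s + Real.sin (μ * s) * q s) / μ) + g s) := by
      congr 1
      ext s
      have hsc := Real.sin_sq_add_cos_sq (μ * s)
      field_simp
      linear_combination g s * hsc
    simp only [Pi.neg_apply] at this
    rw [h2] at this
    simp only [mul_zero, Real.cos_zero, Real.sin_zero] at this
    rw [this]
    ring
  · intro t ht
    have hE := rotating_energy_le μ (μ * a₀) b₀ ht.1 (hgi ht) (hgi2 ht)
    change p t ^ 2 + q t ^ 2 ≤ _ at hE
    have hsc := Real.sin_sq_add_cos_sq (μ * t)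
    have : (-Real.sin (μ * t) * p t + Real.cos (μ * t) * q t) ^ 2
        + μ ^ 2 * ((Real.cos (μ * t) * p t + Real.sin (μ * t) * q t) / μ) ^ 2
        = p t ^ 2 + q t ^ 2 := by
      field_simp
      linear_combination (p t ^ 2 + q t ^ 2) * hsc
    simp only [this]
    calc _ ≤ _ := hE
      _ = _ := by ring

/-- The free oscillator with zero initial data stays at rest. -/
lemma oscillator_eq_zero {a b : ℝ → ℝ} {T l : ℝ} (hl : 0 < l) (hT : 0 < T)
    (ha : ContinuousOn a (Icc 0 T)) (hb : ContinuousOn b (Icc 0 T))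
    (h1 : ∀ t ∈ Icc (0 : ℝ) T, a t = ∫ s in (0 : ℝ)..t, b s)
    (h2 : ∀ t ∈ Icc (0 : ℝ) T, b t = ∫ s in (0 : ℝ)..t, -l * a s) :
    ∀ t ∈ Icc (0 : ℝ) T, a t = 0 ∧ b t = 0 := by
  -- Constant extensions of `a` and `b` make their primitives differentiable at the endpoints too.
  let A := IccExtend hT.le ((Icc 0 T).domRestrict a)
  let B := IccExtend hT.le ((Icc 0 T).domRestrict b)
  have hA : Continuous A := ha.domRestrict.Icc_extend'
  have hB : Continuous B := hb.domRestrict.Icc_extend'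
  have hAe {t : ℝ} (ht : t ∈ Icc (0 : ℝ) T) : A t = a t := IccExtend_of_mem _ _ ht
  have hBe {t : ℝ} (ht : t ∈ Icc (0 : ℝ) T) : B t = b t := IccExtend_of_mem _ _ ht
  have hmem {s t : ℝ} (ht : t ∈ Icc (0 : ℝ) T) (hs : s ∈ uIcc 0 t) : s ∈ Icc (0 : ℝ) T := by
    rw [uIcc_of_le ht.1] at hs; exact ⟨hs.1, hs.2.trans ht.2⟩
  have h1' {t : ℝ} (ht : t ∈ Icc (0 : ℝ) T) : a t = ∫ s in (0 : ℝ)..t, B s := by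
    rw [h1 t ht]
    exact intervalIntegral.integral_congr fun s hs => (hBe (hmem ht hs)).symm
  have h2' {t : ℝ} (ht : t ∈ Icc (0 : ℝ) T) : b t = -l * ∫ s in (0 : ℝ)..t, A s := by
    rw [h2 t ht, intervalIntegral.integral_const_mul]
    congr 1
    exact intervalIntegral.integral_congr fun s hs => (hAe (hmem ht hs)).symm
  have dA (t : ℝ) : HasDerivAt (fun t => ∫ s in (0 : ℝ)..t, A s) (A t) t :=
    hA.integral_hasStrictDerivAt 0 t |>.hasDerivAt
  have dB (t : ℝ) : HasDerivAt (fun t => ∫ s in (0 : ℝ)..t, B s) (B t) t :=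
    hB.integral_hasStrictDerivAt 0 t |>.hasDerivAt
  have dE (t : ℝ) := (((dB t).pow 2).const_mul l).add (((dA t).const_mul (-l)).pow 2)
  have hconst := constant_of_has_deriv_right_zero (a := 0) (b := T)
    (fun t _ => (dE t).continuousAt.continuousWithinAt) (fun t ht => by
      have ht' : t ∈ Icc (0 : ℝ) T := ⟨ht.1, ht.2.le⟩
      convert! (dE t).hasDerivWithinAt using 1
      rw [← h1' ht', ← h2' ht', hAe ht', hBe ht']
      ring)
  intro t ht
  have := hconst t ht
  simp only [Pi.add_apply, Pi.pow_apply, intervalIntegral.integral_same] at this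
  rw [← h1' ht, ← h2' ht] at this
  have hz : l * a t ^ 2 + b t ^ 2 = 0 := by simpa using this
  have hb0 : b t ^ 2 = 0 := by nlinarith [sq_nonneg (b t), mul_nonneg hl.le (sq_nonneg (a t))]
  have ha0 : l * a t ^ 2 = 0 := by linarith
  exact ⟨by simpa [hl.ne'] using ha0, by simpa using hb0⟩

section Hilbert

variable {H : Type*} [NormedAddCommGroup H] [InnerProductSpace ℝ H]

lemma eq_of_inner_basis_eq (ω : HilbertBasis ℕ ℝ H) {x y : H}
    (h : ∀ k, ⟪x, ω k⟫ = ⟪y, ω k⟫) : x = y := by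
  have := hasSum_inner_sq ω (x - y)
  simp only [inner_sub_left, h, sub_self] at this
  have h0 : ‖x - y‖ ^ 2 = 0 := this.unique (by simp)
  simpa [sub_eq_zero] using h0

/-- Coefficients that are continuous in time and square-dominated, uniformly in time, by a
summable sequence are the coefficients of a continuous `H`-valued function. -/
lemma exists_continuousOn_of_coeff (ω : HilbertBasis ℕ ℝ H) {K : Set ℝ} {c : ℕ → ℝ → ℝ}
    {M : ℕ → ℝ} (hc : ∀ k, ContinuousOn (c k) K) (hM : Summable M)
    (hcM : ∀ k, ∀ t ∈ K, c k t ^ 2 ≤ M k) :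
    ∃ u : ℝ → H, ContinuousOn u K ∧ ∀ t ∈ K, ∀ k, ⟪u t, ω k⟫ = c k t := by
  have hex : ∀ t, ∃ x : H, t ∈ K → ∀ k, ⟪x, ω k⟫ = c k t := by
    intro t
    by_cases ht : t ∈ K
    · have hmem : Memℓp (fun k => c k t) 2 := by
        apply memℓp_gen
        simpa using Summable.of_nonneg_of_le (fun k => sq_nonneg _) (fun k => hcM k t ht) hM
      refine ⟨ω.repr.symm ⟨_, hmem⟩, fun _ k => ?_⟩
      rw [real_inner_comm, ← ω.repr_apply_apply]
      simp
    · exact ⟨0, fun h => absurd h ht⟩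
  choose u hu using hex
  refine ⟨u, fun t₀ ht₀ => ?_, fun t ht k => hu t ht k⟩
  have key : Filter.Tendsto (fun t => ∑' k, (c k t - c k t₀) ^ 2) (nhdsWithin t₀ K)
      (nhds (∑' _ : ℕ, (0 : ℝ))) := by
    refine tendsto_tsum_of_dominated_convergence (bound := fun k => 4 * M k)
      (hM.mul_left 4) (fun k => ?_) ?_
    · have := ((hc k t₀ ht₀).sub_const (c k t₀)).pow 2
      simpa [ContinuousWithinAt] using this
    · filter_upwards [self_mem_nhdsWithin] with t ht k
      rw [Real.norm_of_nonneg (sq_nonneg _)]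
      nlinarith [hcM k t ht, hcM k t₀ ht₀, sq_nonneg (c k t + c k t₀)]
  rw [tsum_zero] at key
  have h2 : Filter.Tendsto (fun t => ‖u t - u t₀‖ ^ 2) (nhdsWithin t₀ K) (nhds 0) := by
    refine key.congr' ?_
    filter_upwards [self_mem_nhdsWithin] with t ht
    rw [← (hasSum_inner_sq ω (u t - u t₀)).tsum_eq]
    simp only [inner_sub_left, hu t ht, hu t₀ ht₀]
  rw [ContinuousWithinAt, tendsto_iff_norm_sub_tendsto_zero]
  simpa using h2.sqrt

/-- Parseval's identity integrated in time. -/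
lemma hasSum_integral_inner_sq (ω : HilbertBasis ℕ ℝ H) {f : ℝ → H} {T t : ℝ}
    (hfm : AEStronglyMeasurable f (volume.restrict (Icc 0 T)))
    (hfint : IntegrableOn (fun s => ‖f s‖ ^ 2) (Icc 0 T)) (ht : t ∈ Icc (0 : ℝ) T) :
    HasSum (fun k => ∫ s in (0 : ℝ)..t, ⟪f s, ω k⟫ ^ 2) (∫ s in (0 : ℝ)..t, ‖f s‖ ^ 2) := by
  have hsub : uIcc 0 t ⊆ Icc 0 T := by
    rw [uIcc_of_le ht.1]; exact Icc_subset_Icc_right ht.2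
  refine intervalIntegral.hasSum_integral_of_dominated_convergence
    (fun k s => ⟪f s, ω k⟫ ^ 2) (fun k => ?_) (fun k => ?_) ?_ ?_ ?_
  · have hm := hfm.mono_measure (Measure.restrict_mono (uIoc_subset_uIcc.trans hsub) le_rfl)
    exact (hm.inner aestronglyMeasurable_const).pow 2
  · exact Filter.Eventually.of_forall fun s _ => by rw [Real.norm_of_nonneg (sq_nonneg _)]
  · exact Filter.Eventually.of_forall fun s _ => (hasSum_inner_sq ω (f s)).summable
  · simp only [(hasSum_inner_sq ω (f _)).tsum_eq]
    exact (hfint.mono_set hsub).intervalIntegrable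
  · exact Filter.Eventually.of_forall fun s _ => hasSum_inner_sq ω (f s)

end Hilbert

/-- **Abstract Faedo–Galerkin well-posedness and energy estimate for the linear
hyperbolic problem `u″ + 𝓛u = f`.**  `𝓛` is represented by a Hilbert basis `(ω_k)` of
eigenvectors with eigenvalues `λ_k ≥ λ₁ > 0`, and `v` plays the role of the velocity
`u′`.  For initial data `u⁰` (of finite energy `∑ₖ λ_k ⟨u⁰, ω_k⟩² < ∞`), `u¹ ∈ H`, and
`f` square-Bochner integrable on `[0,T]`, there is exactly one pair of continuous
functions `(u, v)` on `[0,T]` with `u(0) = u⁰`, `v(0) = u¹` solving the mode-wise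
integral equations, and it satisfies the energy estimate
`‖v(t)‖² + ∑ₖ λ_k ⟨u(t), ω_k⟩² ≤ eᵗ (‖u¹‖² + ∑ₖ λ_k ⟨u⁰, ω_k⟩² + ∫₀ᵗ ‖f‖²)`. -/
theorem stmt13 {H : Type*} [NormedAddCommGroup H] [InnerProductSpace ℝ H]
    [CompleteSpace H] (ω : HilbertBasis ℕ ℝ H)
    (lam₁ : ℝ) (hlam₁ : 0 < lam₁) (lam : ℕ → ℝ) (hlam : ∀ k, lam₁ ≤ lam k)
    (T : ℝ) (hT : 0 < T) (u₀ u₁ : H)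
    (hu₀ : Summable (fun k : ℕ => lam k * ⟪u₀, ω k⟫ ^ 2))
    (f : ℝ → H)
    (hfm : AEStronglyMeasurable f (volume.restrict (Icc 0 T)))
    (hfint : IntegrableOn (fun s => ‖f s‖ ^ 2) (Icc 0 T)) :
    (∃ u v : ℝ → H,
        (ContinuousOn u (Icc 0 T) ∧ ContinuousOn v (Icc 0 T) ∧
          u 0 = u₀ ∧ v 0 = u₁ ∧
          (∀ k : ℕ, ∀ t ∈ Icc (0 : ℝ) T,
            ⟪u t, ω k⟫ = ⟪u₀, ω k⟫ + ∫ s in (0 : ℝ)..t, ⟪v s, ω k⟫) ∧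
          (∀ k : ℕ, ∀ t ∈ Icc (0 : ℝ) T,
            ⟪v t, ω k⟫ = ⟪u₁, ω k⟫ +
              ∫ s in (0 : ℝ)..t, (-(lam k) * ⟪u s, ω k⟫ + ⟪f s, ω k⟫))) ∧
        ∀ t ∈ Icc (0 : ℝ) T,
          ‖v t‖ ^ 2 + ∑' k : ℕ, lam k * ⟪u t, ω k⟫ ^ 2 ≤
            Real.exp t *
              (‖u₁‖ ^ 2 + (∑' k : ℕ, lam k * ⟪u₀, ω k⟫ ^ 2) +
                ∫ s in (0 : ℝ)..t, ‖f s‖ ^ 2)) ∧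
    (∀ u v u' v' : ℝ → H,
        (ContinuousOn u (Icc 0 T) ∧ ContinuousOn v (Icc 0 T) ∧
          u 0 = u₀ ∧ v 0 = u₁ ∧
          (∀ k : ℕ, ∀ t ∈ Icc (0 : ℝ) T,
            ⟪u t, ω k⟫ = ⟪u₀, ω k⟫ + ∫ s in (0 : ℝ)..t, ⟪v s, ω k⟫) ∧
          (∀ k : ℕ, ∀ t ∈ Icc (0 : ℝ) T,
            ⟪v t, ω k⟫ = ⟪u₁, ω k⟫ +
              ∫ s in (0 : ℝ)..t, (-(lam k) * ⟪u s, ω k⟫ + ⟪f s, ω k⟫))) →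
        (ContinuousOn u' (Icc 0 T) ∧ ContinuousOn v' (Icc 0 T) ∧
          u' 0 = u₀ ∧ v' 0 = u₁ ∧
          (∀ k : ℕ, ∀ t ∈ Icc (0 : ℝ) T,
            ⟪u' t, ω k⟫ = ⟪u₀, ω k⟫ + ∫ s in (0 : ℝ)..t, ⟪v' s, ω k⟫) ∧
          (∀ k : ℕ, ∀ t ∈ Icc (0 : ℝ) T,
            ⟪v' t, ω k⟫ = ⟪u₁, ω k⟫ +
              ∫ s in (0 : ℝ)..t, (-(lam k) * ⟪u' s, ω k⟫ + ⟪f s, ω k⟫))) →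
        EqOn u u' (Icc 0 T) ∧ EqOn v v' (Icc 0 T)) := by
  have hpos (k : ℕ) : 0 < lam k := hlam₁.trans_le (hlam k)
  have hle (k : ℕ) (s : ℝ) : ⟪f s, ω k⟫ ^ 2 ≤ ‖f s‖ ^ 2 :=
    (hasSum_inner_sq ω (f s)).summable.le_tsum k (fun _ _ => sq_nonneg _) |>.trans_eq
      (hasSum_inner_sq ω (f s)).tsum_eq
  have hgm (k : ℕ) : AEStronglyMeasurable (fun s => ⟪f s, ω k⟫) (volume.restrict (Icc 0 T)) :=
    hfm.inner aestronglyMeasurable_const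
  have hg2 (k : ℕ) : IntegrableOn (fun s => ⟪f s, ω k⟫ ^ 2) (Icc 0 T) :=
    hfint.mono' ((hgm k).pow 2) (Filter.Eventually.of_forall fun s => by
      rw [Real.norm_of_nonneg (sq_nonneg _)]; exact hle k s)
  have hg (k : ℕ) : IntegrableOn (fun s => ⟪f s, ω k⟫) (Icc 0 T) :=
    ((memLp_two_iff_integrable_sq (hgm k)).2 (hg2 k)).integrable one_le_two
  have hsub {t : ℝ} (ht : t ∈ Icc (0 : ℝ) T) : uIcc 0 t ⊆ Icc 0 T := by
    rw [uIcc_of_le ht.1]; exact Icc_subset_Icc_right ht.2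
  have h0T : (0 : ℝ) ∈ Icc (0 : ℝ) T := ⟨le_rfl, hT.le⟩
  have hTT : T ∈ Icc (0 : ℝ) T := ⟨hT.le, le_rfl⟩
  constructor
  · choose a b hac hbc ha hb hE using fun k =>
      exists_oscillator hT (hpos k) ⟪u₀, ω k⟫ ⟪u₁, ω k⟫ (hg k) (hg2 k)
    have hdata {t : ℝ} (ht : t ∈ Icc (0 : ℝ) T) :=
      ((hasSum_inner_sq ω u₁).add hu₀.hasSum).add (hasSum_integral_inner_sq ω hfm hfint ht)
    let M : ℕ → ℝ := fun k => (1 + T) * (⟪u₁, ω k⟫ ^ 2 + lam k * ⟪u₀, ω k⟫ ^ 2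
      + ∫ s in (0 : ℝ)..T, ⟪f s, ω k⟫ ^ 2)
    have hM : Summable M := (hdata hTT).summable.mul_left _
    have hEM (k : ℕ) (t : ℝ) (ht : t ∈ Icc (0 : ℝ) T) :
        b k t ^ 2 + lam k * a k t ^ 2 ≤ M k := by
      refine (hE k t ht).trans ?_
      have h1 : ∫ s in (0 : ℝ)..t, ⟪f s, ω k⟫ ^ 2 ≤ ∫ s in (0 : ℝ)..T, ⟪f s, ω k⟫ ^ 2 :=
        intervalIntegral.integral_mono_interval le_rfl ht.1 ht.2
          (Filter.Eventually.of_forall fun s => sq_nonneg _)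
          ((hg2 k).mono_set (hsub hTT)).intervalIntegrable
      have h2 : 0 ≤ ∫ s in (0 : ℝ)..t, ⟪f s, ω k⟫ ^ 2 :=
        intervalIntegral.integral_nonneg ht.1 fun s _ => sq_nonneg _
      have h3 := hpos k
      have h4 := ht.1
      have h5 := ht.2
      dsimp only [M]
      gcongr
    obtain ⟨u, huc, hu⟩ := exists_continuousOn_of_coeff ω hac (hM.div_const lam₁)
      (fun k t ht => by
        rw [le_div_iff₀ hlam₁]
        nlinarith [hEM k t ht, sq_nonneg (b k t), mul_le_mul_of_nonneg_right (hlam k)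
          (sq_nonneg (a k t))])
    obtain ⟨v, hvc, hv⟩ := exists_continuousOn_of_coeff ω hbc hM
      (fun k t ht => by nlinarith [hEM k t ht, mul_nonneg (hpos k).le (sq_nonneg (a k t))])
    refine ⟨u, v, ⟨huc, hvc, ?_, ?_, ?_, ?_⟩, ?_⟩
    · refine eq_of_inner_basis_eq ω fun k => ?_
      rw [hu 0 h0T, ha k 0 h0T]; simp
    · refine eq_of_inner_basis_eq ω fun k => ?_
      rw [hv 0 h0T, hb k 0 h0T]; simp
    · intro k t ht
      rw [hu t ht, ha k t ht]
      congr 1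
      exact intervalIntegral.integral_congr fun s hs => (hv s (hsub ht hs) k).symm
    · intro k t ht
      rw [hv t ht, hb k t ht]
      congr 1
      refine intervalIntegral.integral_congr fun s hs => ?_
      simp only [hu s (hsub ht hs) k]
    · intro t ht
      have hsv := hasSum_inner_sq ω (v t)
      simp only [hv t ht] at hsv
      have hsu : Summable fun k => lam k * a k t ^ 2 :=
        Summable.of_nonneg_of_le (fun k => mul_nonneg (hpos k).le (sq_nonneg _))
          (fun k => by nlinarith [hEM k t ht, sq_nonneg (b k t)]) hM
      have hsum := hasSum_le (fun k => hE k t ht) (hsv.add hsu.hasSum) ((hdata ht).mul_left (1 + t))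
      simp only [hu t ht]
      refine hsum.trans ?_
      have hexp : 1 + t ≤ Real.exp t := by linarith [Real.add_one_le_exp t]
      refine mul_le_mul_of_nonneg_right hexp ?_
      have h1 : 0 ≤ ∑' k, lam k * ⟪u₀, ω k⟫ ^ 2 :=
        tsum_nonneg fun k => mul_nonneg (hpos k).le (sq_nonneg _)
      have h2 : 0 ≤ ∫ s in (0 : ℝ)..t, ‖f s‖ ^ 2 :=
        intervalIntegral.integral_nonneg ht.1 fun s _ => sq_nonneg _
      positivity
  · rintro u v u' v' ⟨huc, hvc, -, -, hu, hv⟩ ⟨huc', hvc', -, -, hu', hv'⟩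
    have hci {w : ℝ → H} (hw : ContinuousOn w (Icc 0 T)) (k : ℕ) :
        ContinuousOn (fun s => ⟪w s, ω k⟫) (Icc 0 T) := hw.inner continuousOn_const
    have hint {w : ℝ → H} (hw : ContinuousOn w (Icc 0 T)) (k : ℕ) {t : ℝ}
        (ht : t ∈ Icc (0 : ℝ) T) : IntervalIntegrable (fun s => ⟪w s, ω k⟫) volume 0 t :=
      ((hci hw k).mono (hsub ht)).intervalIntegrable
    have hfi (k : ℕ) {t : ℝ} (ht : t ∈ Icc (0 : ℝ) T) :
        IntervalIntegrable (fun s => ⟪f s, ω k⟫) volume 0 t :=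
      ((hg k).mono_set (hsub ht)).intervalIntegrable
    have hz (k : ℕ) := oscillator_eq_zero (hpos k) hT
      ((hci huc k).sub (hci huc' k)) ((hci hvc k).sub (hci hvc' k))
      (fun t ht => by
        simp only [Pi.sub_apply]
        rw [intervalIntegral.integral_sub (hint hvc k ht) (hint hvc' k ht), hu k t ht, hu' k t ht]
        ring)
      (fun t ht => by
        simp only [Pi.sub_apply]
        rw [hv k t ht, hv' k t ht, add_sub_add_left_eq_sub, ← intervalIntegral.integral_sub
          (((hint huc k ht).const_mul _).add (hfi k ht))
          (((hint huc' k ht).const_mul _).add (hfi k ht))]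
        congr 1
        ext s
        ring)
    exact ⟨fun t ht => eq_of_inner_basis_eq ω fun k => sub_eq_zero.1 (hz k t ht).1,
      fun t ht => eq_of_inner_basis_eq ω fun k => sub_eq_zero.1 (hz k t ht).2⟩
end
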